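/- In the two-state i.i.d. model, if at least one of the trace lengths m(n) or l(n) is less than or equal to c·n^{2−α} for some constants c > 0 and α > 0, then user 1 has perfect anonymity: the Shannon conditional entropy H(Π(1) | W, Y) tends to +∞ as n → ∞. -/

import Mathlib

open MeasureTheory ProbabilityTheory Filter
open scoped ENNReal NNReal

/-- Bernoulli measure on `Bool` with success probability `p`. -/
noncomputable def bern (p : ℝ) : Measure Bool :=
  ENNReal.ofReal p • Measure.dirac true + ENNReal.ofReal (1 - p) • Measure.dirac false

/-- Joint law of (parameters, actual traces, training traces) in the two-state i.i.d. model: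
the parameters `p u` are i.i.d. with law `μP`, and conditionally on the parameters the
`n` actual traces (of length `m`) and training traces (of length `l`) consist of i.i.d.
`Bernoulli (p u)` samples, all mutually independent. -/
noncomputable def twoStateLaw (n m l : ℕ) (μP : Measure ℝ) :
    Measure ((Fin n → ℝ) × (Fin n → Fin m → Bool) × (Fin n → Fin l → Bool)) :=
  (Measure.pi fun _ : Fin n => μP).bind fun p =>
    (Measure.dirac p).prod
      ((Measure.pi fun u : Fin n => Measure.pi fun _ : Fin m => bern (p u)).prod
        (Measure.pi fun u : Fin n => Measure.pi fun _ : Fin l => bern (p u)))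

/-- Shannon conditional entropy `H(A | B)` of discrete random variables `A` and `B`. -/
noncomputable def shCondEntropy {Ω α β : Type*} [MeasurableSpace Ω] (μ : Measure Ω)
    (A : Ω → α) (B : Ω → β) : ℝ :=
  -∑' (a : α) (b : β),
    (μ (A ⁻¹' {a} ∩ B ⁻¹' {b})).toReal *
      Real.log ((μ (A ⁻¹' {a} ∩ B ⁻¹' {b})).toReal / (μ (B ⁻¹' {b})).toReal)

/-! The entropy `H(Π(i) | W, Y)` is at least `-log S` when every guess of `Π(i)` made from `(W, Y)`
is correct with probability at most `S`, so it suffices to let this probability become small.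
In the arcsine parametrization the Hellinger affinity of two Bernoulli laws is the cosine of the
difference of their angles; swapping the traces of length `k` of two users whose angles differ by
at most `d` therefore changes the joint law by `O(√k d)` in total variation. It is enough to swap
only the actual or only the training traces, whichever are shorter: for the training traces,
relabelling the users moves the swap onto the parameters, whose law is exchangeable. Cut the
angles into about `2 / d` cells. A guess then singles out all users of a cell almost equally
often, so it finds a given user with probability at most the mean inverse size of that user's
cell, which is `O(1 / (n d))` by exchangeability, plus `O(√k d)`. For `d = a / n` and `k = o(n ^ 2)`
the bound tends to `2 / a`, and `a` is arbitrary. -/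

section Entropy

variable {α β : Type*}

lemma shCondEntropy_comp_left {Ω γ : Type*} [MeasurableSpace Ω] (μ : Measure Ω) {φ : α → γ}
    (hφ : Function.Injective φ) (A : Ω → α) (B : Ω → β) :
    shCondEntropy μ (fun ω ↦ φ (A ω)) B = shCondEntropy μ A B := by
  have hpre : ∀ a, (fun ω ↦ φ (A ω)) ⁻¹' {φ a} = A ⁻¹' {a} := fun a ↦ by ext; simp [hφ.eq_iff]
  unfold shCondEntropy
  rw [← hφ.tsum_eq fun c hc ↦ ?_]
  · simp only [hpre]
  · contrapose! hc
    have hempty : (fun ω ↦ φ (A ω)) ⁻¹' {c} = ∅ := by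
      ext ω
      simpa using fun h ↦ hc ⟨A ω, h⟩
    simp [hempty]

lemma sum_mul_log_div_sum_le_log [Fintype α] [Fintype β] [Nonempty α] {q : α → β → ℝ}
    (hq : ∀ a b, 0 ≤ q a b) (hq_one : ∑ b, ∑ a, q a b = 1) {S : ℝ} (hS₀ : 0 < S)
    (hS : ∀ g : β → α, ∑ b, q (g b) b ≤ S) :
    ∑ b, ∑ a, q a b * Real.log (q a b / ∑ a', q a' b) ≤ Real.log S := by
  -- `g` is the maximum a posteriori guess; `log x ≤ x - 1` linearizes at the threshold `S`.
  choose g hg using fun b ↦ Finite.exists_max fun a ↦ q a b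
  set r : β → ℝ := fun b ↦ ∑ a, q a b
  have hr : ∀ b, 0 ≤ r b := fun b ↦ Finset.sum_nonneg fun a _ ↦ hq a b
  have hterm : ∀ a b, q a b * Real.log (q a b / r b) ≤
      q a b * (Real.log S - 1 + q (g b) b / (r b * S)) := fun a b ↦ by
    rcases (hq a b).eq_or_lt with h0 | hpos
    · simp [← h0]
    have hrb : 0 < r b :=
      hpos.trans_le (Finset.single_le_sum (fun a _ ↦ hq a b) (Finset.mem_univ a))
    refine mul_le_mul_of_nonneg_left ?_ hpos.le
    calc Real.log (q a b / r b)
        = Real.log S + Real.log (q a b / (r b * S)) := by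
          rw [← Real.log_mul hS₀.ne' (by positivity)]
          congr 1
          field_simp
      _ ≤ Real.log S + (q a b / (r b * S) - 1) := by
          gcongr
          exact Real.log_le_sub_one_of_pos (by positivity)
      _ ≤ Real.log S - 1 + q (g b) b / (r b * S) := by
          have : q a b / (r b * S) ≤ q (g b) b / (r b * S) := by gcongr; exact hg b a
          linarith
  have hcol : ∀ b, r b * (q (g b) b / (r b * S)) ≤ q (g b) b / S := fun b ↦ by
    rcases (hr b).eq_or_lt with h0 | hpos
    · rw [← h0, zero_mul]
      exact div_nonneg (hq _ _) hS₀.le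
    · exact (by field_simp : r b * (q (g b) b / (r b * S)) = q (g b) b / S).le
  calc ∑ b, ∑ a, q a b * Real.log (q a b / r b)
      ≤ ∑ b, ∑ a, q a b * (Real.log S - 1 + q (g b) b / (r b * S)) :=
        Finset.sum_le_sum fun b _ ↦ Finset.sum_le_sum fun a _ ↦ hterm a b
    _ = ∑ b, (r b * (Real.log S - 1) + r b * (q (g b) b / (r b * S))) := by
        simp only [← Finset.sum_mul, ← mul_add, r]
    _ ≤ ∑ b, (r b * (Real.log S - 1) + q (g b) b / S) := by gcongr with b; exact hcol b
    _ = Real.log S - 1 + (∑ b, q (g b) b) / S := by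
        rw [Finset.sum_add_distrib, ← Finset.sum_mul, ← Finset.sum_div, hq_one, one_mul]
    _ ≤ Real.log S := by linarith [(div_le_one hS₀).2 (hS g)]

variable {Ω : Type*} [MeasurableSpace Ω] {μ : Measure Ω}

lemma sum_measureReal_inter_preimage_singleton [Fintype β] [MeasurableSpace β]
    [MeasurableSingletonClass β] [IsFiniteMeasure μ] {B : Ω → β} (hB : Measurable B) (E : Set Ω) :
    ∑ b, μ.real (E ∩ B ⁻¹' {b}) = μ.real E := by
  have h := sum_measureReal_preimage_singleton (μ := μ.restrict E) Finset.univ (f := B)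
    (fun b _ ↦ hB (measurableSet_singleton b))
  simpa [measureReal_restrict_apply (hB (measurableSet_singleton _)), Set.inter_comm] using h

lemma neg_log_le_shCondEntropy [IsProbabilityMeasure μ] [Finite α] [MeasurableSpace α]
    [MeasurableSingletonClass α] [Finite β] [MeasurableSpace β] [MeasurableSingletonClass β]
    {A : Ω → α} {B : Ω → β} (hA : Measurable A) (hB : Measurable B) {S : ℝ} (hS₀ : 0 < S)
    (hS : ∀ g : β → α, μ.real {ω | g (B ω) = A ω} ≤ S) :
    -Real.log S ≤ shCondEntropy μ A B := by
  cases nonempty_fintype α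
  cases nonempty_fintype β
  have hB_marginal : ∀ b, ∑ a, μ.real (A ⁻¹' {a} ∩ B ⁻¹' {b}) = μ.real (B ⁻¹' {b}) := fun b ↦ by
    simpa only [Set.inter_comm] using sum_measureReal_inter_preimage_singleton hA (B ⁻¹' {b})
  have htotal : ∑ b, ∑ a, μ.real (A ⁻¹' {a} ∩ B ⁻¹' {b}) = 1 := by
    simp_rw [hB_marginal]
    simpa using sum_measureReal_inter_preimage_singleton (μ := μ) hB Set.univ
  have hguess : ∀ g : β → α, ∑ b, μ.real (A ⁻¹' {g b} ∩ B ⁻¹' {b}) ≤ S := fun g ↦ by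
    refine le_trans (le_of_eq ?_) (hS g)
    rw [← sum_measureReal_inter_preimage_singleton hB]
    refine Finset.sum_congr rfl fun b _ ↦ congrArg μ.real ?_
    ext ω
    simp only [Set.mem_inter_iff, Set.mem_preimage, Set.mem_singleton_iff, Set.mem_ofPred_eq]
    grind
  have : Nonempty α := μ.nonempty_of_neZero.map A
  have h := sum_mul_log_div_sum_le_log (fun _ _ ↦ measureReal_nonneg) htotal hS₀ hguess
  rw [Finset.sum_comm] at h
  simp only [hB_marginal] at h
  simpa only [shCondEntropy, tsum_fintype, neg_le_neg_iff, measureReal_def] using h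

end Entropy

section Hellinger

variable {α : Type*} [Fintype α] [MeasurableSpace α]

/-- The Hellinger affinity (Bhattacharyya coefficient) of two measures on a finite type. It is
multiplicative over products and bounds how well the two laws can be told apart. -/
noncomputable def affinity (μ ν : Measure α) : ℝ :=
  ∑ x, √(μ.real {x} * ν.real {x})

lemma affinity_comm (μ ν : Measure α) : affinity μ ν = affinity ν μ := by
  simp only [affinity, mul_comm]

lemma affinity_pi {ι : Type*} [Fintype ι] [DecidableEq ι] (μ ν : ι → Measure α)
    [∀ i, SigmaFinite (μ i)] [∀ i, SigmaFinite (ν i)] :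
    affinity (Measure.pi μ) (Measure.pi ν) = ∏ i, affinity (μ i) (ν i) := by
  simp only [affinity, measureReal_def, Measure.pi_singleton, ENNReal.toReal_prod,
    ← Finset.prod_mul_distrib, Finset.prod_univ_sum, Fintype.piFinset_univ]
  exact Finset.sum_congr rfl fun x _ ↦ Real.sqrt_prod _ fun i _ ↦ by positivity

variable [MeasurableSingletonClass α]

lemma affinity_self (μ : Measure α) [IsProbabilityMeasure μ] : affinity μ μ = 1 := by
  simp [affinity, Real.sqrt_mul_self measureReal_nonneg]

lemma sum_sqrt_add_mul_sqrt_sq (μ ν : Measure α) [IsProbabilityMeasure μ]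
    [IsProbabilityMeasure ν] (t : ℝ) :
    ∑ x, (√(μ.real {x}) + t * √(ν.real {x})) ^ 2 = 1 + t ^ 2 + 2 * t * affinity μ ν := by
  have hexpand : ∀ x, (√(μ.real {x}) + t * √(ν.real {x})) ^ 2 =
      μ.real {x} + t ^ 2 * ν.real {x} + 2 * t * √(μ.real {x} * ν.real {x}) := fun x ↦ by
    rw [Real.sqrt_mul measureReal_nonneg, add_sq, mul_pow, Real.sq_sqrt measureReal_nonneg,
      Real.sq_sqrt measureReal_nonneg]
    ring
  simp [hexpand, Finset.sum_add_distrib, ← Finset.mul_sum, affinity]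

lemma measureReal_sub_le_two_mul_sqrt_one_sub_affinity_sq (μ ν : Measure α)
    [IsProbabilityMeasure μ] [IsProbabilityMeasure ν] (A : Set α) :
    μ.real A - ν.real A ≤ 2 * √(1 - affinity μ ν ^ 2) := by
  classical
  set a : α → ℝ := fun x ↦ √(μ.real {x})
  set b : α → ℝ := fun x ↦ √(ν.real {x})
  have hsum : ∑ x ∈ A.toFinset, (a x + -1 * b x) * (a x + 1 * b x) = μ.real A - ν.real A := by
    have hμ := sum_measureReal_singleton (μ := μ) A.toFinset
    have hν := sum_measureReal_singleton (μ := ν) A.toFinset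
    rw [Set.coe_toFinset] at hμ hν
    rw [← hμ, ← hν, ← Finset.sum_sub_distrib]
    refine Finset.sum_congr rfl fun x _ ↦ ?_
    rw [← Real.sq_sqrt (measureReal_nonneg (μ := μ)), ← Real.sq_sqrt (measureReal_nonneg (μ := ν))]
    ring
  have hCS : (μ.real A - ν.real A) ^ 2 ≤ 4 * (1 - affinity μ ν ^ 2) :=
    calc (μ.real A - ν.real A) ^ 2
        ≤ (∑ x ∈ A.toFinset, (a x + -1 * b x) ^ 2) * ∑ x ∈ A.toFinset, (a x + 1 * b x) ^ 2 :=
          hsum ▸ Finset.sum_mul_sq_le_sq_mul_sq _ _ _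
      _ ≤ (∑ x, (a x + -1 * b x) ^ 2) * ∑ x, (a x + 1 * b x) ^ 2 := by
          gcongr <;> exact Finset.subset_univ _
      _ = 4 * (1 - affinity μ ν ^ 2) := by
          rw [sum_sqrt_add_mul_sqrt_sq, sum_sqrt_add_mul_sqrt_sq]
          ring
  calc μ.real A - ν.real A ≤ √(4 * (1 - affinity μ ν ^ 2)) := Real.le_sqrt_of_sq_le hCS
    _ = 2 * √(1 - affinity μ ν ^ 2) := by
        rw [Real.sqrt_mul zero_le_four, show (4 : ℝ) = 2 ^ 2 by norm_num,
          Real.sqrt_sq zero_le_two]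

lemma measure_le_add_ofReal_two_mul_sqrt (μ ν : Measure α) [IsProbabilityMeasure μ]
    [IsProbabilityMeasure ν] (A : Set α) :
    μ A ≤ ν A + ENNReal.ofReal (2 * √(1 - affinity μ ν ^ 2)) := by
  rw [← ofReal_measureReal (μ := μ), ← ofReal_measureReal (μ := ν),
    ← ENNReal.ofReal_add measureReal_nonneg (by positivity)]
  exact ENNReal.ofReal_le_ofReal <| sub_le_iff_le_add'.1 <|
    measureReal_sub_le_two_mul_sqrt_one_sub_affinity_sq μ ν A

lemma affinity_pi_swap {ι : Type*} [Fintype ι] [DecidableEq ι] (μ : ι → Measure α)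
    [∀ i, IsProbabilityMeasure (μ i)] {i j : ι} (hij : i ≠ j) :
    affinity (Measure.pi μ) (Measure.pi fun v ↦ μ (Equiv.swap i j v)) =
      affinity (μ i) (μ j) ^ 2 := by
  rw [affinity_pi, Fintype.prod_eq_mul i j hij fun v hv ↦ ?_]
  · rw [Equiv.swap_apply_left, Equiv.swap_apply_right, affinity_comm (μ j), sq]
  · rw [Equiv.swap_apply_of_ne_of_ne hv.1 hv.2, affinity_self]

/-- A bound on the total variation distance incurred when independent samples of laws `μ` and `ν`
trade places. -/
noncomputable def swapCost (μ ν : Measure α) : ℝ≥0∞ :=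
  ENNReal.ofReal (2 * √(1 - affinity μ ν ^ 4))

lemma pi_le_pi_swap_add {ι : Type*} [Fintype ι] [DecidableEq ι] (μ : ι → Measure α)
    [∀ i, IsProbabilityMeasure (μ i)] (i j : ι) (A : Set (ι → α)) :
    Measure.pi μ A ≤ Measure.pi (fun v ↦ μ (Equiv.swap i j v)) A + swapCost (μ i) (μ j) := by
  rcases eq_or_ne i j with rfl | hij
  · simp
  · have h := measure_le_add_ofReal_two_mul_sqrt (Measure.pi μ)
      (Measure.pi fun v ↦ μ (Equiv.swap i j v)) A
    rwa [affinity_pi_swap μ hij, ← pow_mul] at h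

end Hellinger

section Bernoulli

open unitInterval

/-- The arcsine (variance-stabilizing) parametrization of the Bernoulli family: it is the
parameter in which the Hellinger affinity depends only on the difference of two parameters. -/
noncomputable def bernAngle (p : ℝ) : ℝ := Real.arcsin √p

lemma bern_real_singleton {p : ℝ} (hp : p ∈ I) (b : Bool) :
    (bern p).real {b} = if b then p else 1 - p := by
  cases b <;> simp [bern, measureReal_def, hp.1, hp.2]

instance isFiniteMeasure_bern (p : ℝ) : IsFiniteMeasure (bern p) :=
  ⟨by simp [bern]⟩

instance isProbabilityMeasure_bern (p : I) : IsProbabilityMeasure (bern p) :=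
  ⟨by simp [bern, ← ENNReal.ofReal_add p.2.1 (sub_nonneg.2 p.2.2)]⟩

lemma measurable_bern : Measurable bern :=
  Measure.measurable_of_measurable_coe _ fun s _ ↦ by
    simp only [bern, Measure.add_apply, Measure.smul_apply, smul_eq_mul]
    fun_prop

lemma affinity_bern {p q : ℝ} (hp : p ∈ I) (hq : q ∈ I) :
    affinity (bern p) (bern q) = Real.cos (bernAngle p - bernAngle q) := by
  have hsin : ∀ {x : ℝ}, x ∈ I → Real.sin (bernAngle x) = √x := fun {x} hx ↦
    Real.sin_arcsin (by linarith [Real.sqrt_nonneg x]) (Real.sqrt_le_one.2 hx.2)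
  have hcos : ∀ {x : ℝ}, x ∈ I → Real.cos (bernAngle x) = √(1 - x) := fun hx ↦ by
    rw [bernAngle, Real.cos_arcsin, Real.sq_sqrt hx.1]
  simp only [affinity, Fintype.sum_bool, bern_real_singleton hp, bern_real_singleton hq, if_true,
    Bool.false_eq_true, if_false, Real.sqrt_mul hp.1, Real.sqrt_mul (sub_nonneg.2 hp.2),
    Real.cos_sub, hsin, hcos, hp, hq]
  ring

lemma bernAngle_mem_Icc (p : ℝ) : bernAngle p ∈ Set.Icc 0 (Real.pi / 2) :=
  ⟨Real.arcsin_nonneg.2 (Real.sqrt_nonneg p), Real.arcsin_le_pi_div_two _⟩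

lemma one_sub_affinity_pi_bern_pow_four_le (m : ℕ) {p q : ℝ} (hp : p ∈ I) (hq : q ∈ I) :
    1 - affinity (Measure.pi fun _ : Fin m ↦ bern p) (Measure.pi fun _ ↦ bern q) ^ 4 ≤
      2 * m * (bernAngle p - bernAngle q) ^ 2 := by
  set x := bernAngle p - bernAngle q
  have hbernoulli : 1 + ((2 * m : ℕ) : ℝ) * -Real.sin x ^ 2 ≤ (1 + -Real.sin x ^ 2) ^ (2 * m) :=
    one_add_mul_le_pow (by linarith [Real.sin_sq_le_one x]) _
  rw [← sub_eq_add_neg, ← Real.cos_sq'] at hbernoulli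
  calc 1 - affinity (Measure.pi fun _ : Fin m ↦ bern p) (Measure.pi fun _ ↦ bern q) ^ 4
      = 1 - (Real.cos x ^ 2) ^ (2 * m) := by
        rw [affinity_pi, Finset.prod_const, Finset.card_fin, affinity_bern hp hq]
        ring
    _ ≤ 2 * m * Real.sin x ^ 2 := by
        push_cast at hbernoulli
        linarith
    _ ≤ 2 * m * x ^ 2 := by
        gcongr 2 * m * ?_
        exact Real.sin_sq_le_sq

end Bernoulli

section ProductMeasures

lemma measurable_measure_prod {Θ α β : Type*} [MeasurableSpace Θ] [MeasurableSpace α]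
    [MeasurableSpace β] {μ : Θ → Measure α} {ν : Θ → Measure β}
    [∀ c, IsProbabilityMeasure (μ c)] [∀ c, IsProbabilityMeasure (ν c)] (hμ : Measurable μ)
    (hν : Measurable ν) : Measurable fun c ↦ (μ c).prod (ν c) := by
  refine Measurable.measure_of_isPiSystem_of_isProbabilityMeasure generateFrom_prod.symm
    isPiSystem_prod ?_
  rintro _ ⟨s, hs, t, ht, rfl⟩
  simp only [Measure.prod_prod]
  exact (Measure.measurable_measure.1 hμ s hs).mul (Measure.measurable_measure.1 hν t ht)

lemma measurable_measure_pi {Θ ι : Type*} {α : ι → Type*} [MeasurableSpace Θ] [Fintype ι]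
    [∀ i, MeasurableSpace (α i)] {μ : Θ → ∀ i, Measure (α i)}
    [∀ c i, IsProbabilityMeasure (μ c i)] (hμ : ∀ i, Measurable fun c ↦ μ c i) :
    Measurable fun c ↦ Measure.pi (μ c) := by
  refine Measurable.measure_of_isPiSystem_of_isProbabilityMeasure generateFrom_pi.symm
    isPiSystem_pi ?_
  rintro _ ⟨s, hs, rfl⟩
  simp only [Measure.pi_pi]
  exact Finset.measurable_fun_prod _ fun i _ ↦
    Measure.measurable_measure.1 (hμ i) (s i) (hs i (Set.mem_univ i))

lemma measurePreserving_comp_perm {ι α : Type*} [Fintype ι] [MeasurableSpace α]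
    (μ : ι → Measure α) [∀ i, SigmaFinite (μ i)] (τ : Equiv.Perm ι) :
    MeasurePreserving (fun (x : ι → α) v ↦ x (τ v)) (Measure.pi μ)
      (Measure.pi fun v ↦ μ (τ v)) :=
  measurePreserving_arrowCongr' μ (fun v ↦ μ (τ v)) τ.symm (.refl α) fun i ↦ by
    rw [Equiv.apply_symm_apply]
    exact .id _

variable {α β : Type*} [MeasurableSpace α] [MeasurableSpace β] {ε : ℝ≥0∞}

lemma prod_right_le_add {ν : Measure α} [IsProbabilityMeasure ν] {μ μ' : Measure β} [SFinite μ]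
    [SFinite μ'] (h : ∀ A, μ A ≤ μ' A + ε) {A : Set (α × β)} (hA : MeasurableSet A) :
    ν.prod μ A ≤ ν.prod μ' A + ε :=
  calc ν.prod μ A = ∫⁻ x, μ (Prod.mk x ⁻¹' A) ∂ν := Measure.prod_apply hA
    _ ≤ ∫⁻ x, (μ' (Prod.mk x ⁻¹' A) + ε) ∂ν := lintegral_mono fun _ ↦ h _
    _ = ν.prod μ' A + ε := by
        rw [lintegral_add_right _ measurable_const, ← Measure.prod_apply hA, lintegral_const,
          measure_univ, mul_one]

lemma prod_left_le_add {ν : Measure β} [IsProbabilityMeasure ν] {μ μ' : Measure α} [SFinite μ]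
    [SFinite μ'] (h : ∀ A, μ A ≤ μ' A + ε) {A : Set (α × β)} (hA : MeasurableSet A) :
    μ.prod ν A ≤ μ'.prod ν A + ε := by
  have hswap := prod_right_le_add (ν := ν) h (measurable_swap hA)
  rwa [← Measure.prod_swap, Measure.map_apply measurable_swap hA, ← Measure.prod_swap (μ := ν),
    Measure.map_apply measurable_swap hA]

end ProductMeasures

section Cells

variable {ι β : Type*} [Fintype ι] [DecidableEq β]

/-- The number of indices carrying the same label as `i` in the labelling `c`. -/
def cellCard (c : ι → β) (i : ι) : ℕ :=
  (Finset.univ.filter fun v ↦ c v = c i).card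

/-- The uniform weight of `u` among the indices carrying the same label as `i`. -/
noncomputable def cellWeight (c : ι → β) (i u : ι) : ℝ≥0∞ :=
  if c u = c i then (cellCard c i : ℝ≥0∞)⁻¹ else 0

lemma cellCard_ne_zero (c : ι → β) (i : ι) : cellCard c i ≠ 0 :=
  (Finset.card_pos.2 ⟨i, by simp⟩).ne'

lemma cellCard_comp_perm (c : ι → β) (τ : Equiv.Perm ι) (i : ι) :
    cellCard (fun v ↦ c (τ v)) i = cellCard c (τ i) :=
  Finset.card_equiv τ (by simp)

lemma cellWeight_comp_swap [DecidableEq ι] (c : ι → β) (i u : ι) :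
    cellWeight (fun v ↦ c (Equiv.swap i u v)) i u = cellWeight c i u := by
  simp only [cellWeight, cellCard_comp_perm, Equiv.swap_apply_left, Equiv.swap_apply_right]
  by_cases h : c u = c i
  · simp only [h, cellCard]
  · simp only [h, Ne.symm h, if_false]

lemma sum_cellWeight (c : ι → β) (i : ι) : ∑ u, cellWeight c i u = 1 := by
  simp only [cellWeight, ← Finset.sum_filter, Finset.sum_const, nsmul_eq_mul]
  exact ENNReal.mul_inv_cancel (mod_cast cellCard_ne_zero c i) (ENNReal.natCast_ne_top _)

lemma cellWeight_le_inv_cellCard (c : ι → β) (i u : ι) :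
    cellWeight c i u ≤ (cellCard c i : ℝ≥0∞)⁻¹ := by
  unfold cellWeight
  split_ifs
  exacts [le_rfl, zero_le]

lemma sum_inv_cellCard_le [Fintype β] (c : ι → β) :
    ∑ i, (cellCard c i : ℝ≥0∞)⁻¹ ≤ Fintype.card β := by
  have hfiber : ∀ b, ∑ i with c i = b, (cellCard c i : ℝ≥0∞)⁻¹ ≤ 1 := fun b ↦ by
    rw [Finset.sum_congr rfl fun i hi ↦ by rw [cellCard, (Finset.mem_filter.1 hi).2],
      Finset.sum_const, nsmul_eq_mul]
    exact ENNReal.mul_inv_le_one _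
  calc ∑ i, (cellCard c i : ℝ≥0∞)⁻¹
      = ∑ b, ∑ i with c i = b, (cellCard c i : ℝ≥0∞)⁻¹ := (Finset.sum_fiberwise _ c _).symm
    _ ≤ ∑ _b : β, 1 := Finset.sum_le_sum fun b _ ↦ hfiber b
    _ = Fintype.card β := by simp

end Cells

section Exchangeable

variable {ι Θ : Type*} [MeasurableSpace Θ]

/-- The law `ν` of a family of random parameters is exchangeable if it is invariant under every
permutation of the family. -/
def IsExchangeable (ν : Measure (ι → Θ)) : Prop :=
  ∀ τ : Equiv.Perm ι, MeasurePreserving (fun p v ↦ p (τ v)) ν ν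

lemma isExchangeable_pi [Fintype ι] (ρ : Measure Θ) [SigmaFinite ρ] :
    IsExchangeable (Measure.pi fun _ : ι ↦ ρ) :=
  measurePreserving_comp_perm fun _ ↦ ρ

variable {β : Type*} [MeasurableSpace β] [MeasurableSingletonClass β] {bin : Θ → β}

lemma measurable_comp_labels [Finite ι] [Finite β] {δ : Type*} [MeasurableSpace δ]
    (hbin : Measurable bin) (φ : (ι → β) → δ) :
    Measurable fun p : ι → Θ ↦ φ fun v ↦ bin (p v) :=
  (measurable_of_countable φ).comp (by fun_prop)

lemma lintegral_inv_cellCard_le [Fintype ι] [Nonempty ι] [Fintype β] [DecidableEq β]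
    {ν : Measure (ι → Θ)} [IsProbabilityMeasure ν] (hν : IsExchangeable ν)
    (hbin : Measurable bin) (i : ι) :
    ∫⁻ p, (cellCard (fun v ↦ bin (p v)) i : ℝ≥0∞)⁻¹ ∂ν ≤ Fintype.card β / Fintype.card ι := by
  classical
  have hmeas : ∀ j, Measurable fun p : ι → Θ ↦ (cellCard (fun v ↦ bin (p v)) j : ℝ≥0∞)⁻¹ :=
    fun j ↦ measurable_comp_labels hbin fun c ↦ (cellCard c j : ℝ≥0∞)⁻¹
  have hsymm : ∀ j, ∫⁻ p, (cellCard (fun v ↦ bin (p v)) j : ℝ≥0∞)⁻¹ ∂ν =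
      ∫⁻ p, (cellCard (fun v ↦ bin (p v)) i : ℝ≥0∞)⁻¹ ∂ν := fun j ↦ by
    rw [← (hν (Equiv.swap i j)).lintegral_comp (hmeas i)]
    simp only [cellCard_comp_perm fun _ ↦ bin _, Equiv.swap_apply_left]
  rw [ENNReal.le_div_iff_mul_le (by simp) (by simp), mul_comm]
  calc Fintype.card ι * ∫⁻ p, (cellCard (fun v ↦ bin (p v)) i : ℝ≥0∞)⁻¹ ∂ν
      = ∑ j, ∫⁻ p, (cellCard (fun v ↦ bin (p v)) j : ℝ≥0∞)⁻¹ ∂ν := by simp [hsymm]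
    _ = ∫⁻ p, ∑ j, (cellCard (fun v ↦ bin (p v)) j : ℝ≥0∞)⁻¹ ∂ν :=
        (lintegral_finsetSum _ fun j _ ↦ hmeas j).symm
    _ ≤ ∫⁻ _, Fintype.card β ∂ν := lintegral_mono fun p ↦ sum_inv_cellCard_le _
    _ = Fintype.card β := by simp

end Exchangeable

section Guessing

variable {ι Θ S S' : Type*} [MeasurableSpace Θ] [MeasurableSpace S] [MeasurableSpace S']

/-- The user singled out by the guess `g` of a pseudonym, for data `z = (X, W)` anonymized by `σ`:
the guess is made from the training traces `W` and the anonymized traces `X ∘ σ⁻¹`. -/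
def guessedUser (g : (ι → S') × (ι → S) → ι) (σ : Equiv.Perm ι)
    (z : (ι → S) × (ι → S')) : ι :=
  σ.symm (g (z.2, fun v ↦ z.1 (σ.symm v)))

variable [Fintype ι]

/-- The joint law of the traces `(X, W)` when user `u` has an actual trace of law `κ (p u)` and a
training trace of law `κ' (q u)`, all independent. In the model `q = p`; the two families are
separated in order to be perturbed one at a time. -/
noncomputable def traceLaw (κ : Kernel Θ S) (κ' : Kernel Θ S') (p q : ι → Θ) :
    Measure ((ι → S) × (ι → S')) :=
  (Measure.pi fun u ↦ κ (p u)).prod (Measure.pi fun u ↦ κ' (q u))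

instance isProbabilityMeasure_traceLaw (κ : Kernel Θ S) (κ' : Kernel Θ S') [IsMarkovKernel κ]
    [IsMarkovKernel κ'] (p q : ι → Θ) : IsProbabilityMeasure (traceLaw κ κ' p q) := by
  unfold traceLaw
  infer_instance

lemma measurable_traceLaw (κ : Kernel Θ S) (κ' : Kernel Θ S') [IsMarkovKernel κ]
    [IsMarkovKernel κ'] : Measurable fun p : ι → Θ ↦ traceLaw κ κ' p p :=
  measurable_measure_prod
    (measurable_measure_pi fun u ↦ κ.measurable.comp (measurable_pi_apply u))
    (measurable_measure_pi fun u ↦ κ'.measurable.comp (measurable_pi_apply u))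

variable [DecidableEq ι]

/-- The probability that `g` singles out user `i` when the traces have law `traceLaw κ κ' p q` and
the permutation is uniform and independent of them. -/
noncomputable def guessProb (κ : Kernel Θ S) (κ' : Kernel Θ S')
    (g : (ι → S') × (ι → S) → ι) (p q : ι → Θ) (i : ι) : ℝ≥0∞ :=
  (Fintype.card (Equiv.Perm ι) : ℝ≥0∞)⁻¹ * ∑ σ, traceLaw κ κ' p q (guessedUser g σ ⁻¹' {i})

lemma inv_card_mul_sum_le_add {σ : Type*} [Fintype σ] {f f' : σ → ℝ≥0∞} {ε : ℝ≥0∞}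
    (h : ∀ s, f s ≤ f' s + ε) :
    (Fintype.card σ : ℝ≥0∞)⁻¹ * ∑ s, f s ≤ (Fintype.card σ : ℝ≥0∞)⁻¹ * ∑ s, f' s + ε :=
  calc (Fintype.card σ : ℝ≥0∞)⁻¹ * ∑ s, f s
      ≤ (Fintype.card σ : ℝ≥0∞)⁻¹ * ∑ s, (f' s + ε) := by gcongr with s; exact h s
    _ = (Fintype.card σ : ℝ≥0∞)⁻¹ * ∑ s, f' s +
        (Fintype.card σ : ℝ≥0∞)⁻¹ * Fintype.card σ * ε := by
        rw [Finset.sum_add_distrib, mul_add, Finset.sum_const, Finset.card_univ, nsmul_eq_mul,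
          mul_assoc]
    _ ≤ (Fintype.card σ : ℝ≥0∞)⁻¹ * ∑ s, f' s + ε := by
        gcongr
        exact mul_le_of_le_one_left' (ENNReal.inv_mul_le_one _)

variable (κ : Kernel Θ S) (κ' : Kernel Θ S') [IsMarkovKernel κ]
  (g : (ι → S') × (ι → S) → ι)

section Discrete

variable [Finite S] [MeasurableSingletonClass S] [Finite S'] [MeasurableSingletonClass S']

lemma guessProb_comp_perm (p q : ι → Θ) (τ : Equiv.Perm ι) (i : ι) :
    guessProb κ κ' g (fun v ↦ p (τ v)) q i = guessProb κ κ' g p q (τ i) := by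
  have hpres := (measurePreserving_comp_perm (fun u ↦ κ (p u)) τ).prod
    (.id (Measure.pi fun u ↦ κ' (q u)))
  unfold guessProb traceLaw
  rw [← Equiv.sum_comp (Equiv.mulRight τ)]
  congr 1
  refine Finset.sum_congr rfl fun σ _ ↦ ?_
  rw [← hpres.measure_preimage (MeasurableSet.of_discrete).nullMeasurableSet]
  congr 1
  ext z
  simp [guessedUser, Equiv.symm_apply_eq, Equiv.Perm.mul_def]

variable [IsMarkovKernel κ']

lemma measurable_guessProb (i : ι) : Measurable fun p ↦ guessProb κ κ' g p p i :=
  .const_mul (Finset.measurable_fun_sum _ fun _ _ ↦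
    Measure.measurable_measure.1 (measurable_traceLaw κ κ') _ .of_discrete) _

lemma sum_guessProb_le_one (p q : ι → Θ) : ∑ i, guessProb κ κ' g p q i ≤ 1 := by
  have hpartition : ∀ σ, ∑ i, traceLaw κ κ' p q (guessedUser g σ ⁻¹' {i}) = 1 := fun σ ↦ by
    rw [sum_measure_preimage_singleton _ fun _ _ ↦ .of_discrete]
    simp
  unfold guessProb
  rw [← Finset.mul_sum, Finset.sum_comm, Finset.sum_congr rfl fun σ _ ↦ hpartition σ]
  simp [ENNReal.inv_mul_le_one]

end Discrete

section Swap

variable [MeasurableSingletonClass S] [MeasurableSingletonClass S'] [IsMarkovKernel κ']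

lemma guessProb_le_guessProb_add_swapCost_left [Fintype S] [Finite S'] (p q : ι → Θ) (i u : ι) :
    guessProb κ κ' g p q i ≤ guessProb κ κ' g p q u + swapCost (κ (p i)) (κ (p u)) :=
  calc guessProb κ κ' g p q i
      ≤ guessProb κ κ' g (fun v ↦ p (Equiv.swap i u v)) q i + swapCost (κ (p i)) (κ (p u)) :=
        inv_card_mul_sum_le_add fun _ ↦
          prod_left_le_add (pi_le_pi_swap_add (fun v ↦ κ (p v)) i u) .of_discrete
    _ = guessProb κ κ' g p q u + swapCost (κ (p i)) (κ (p u)) := by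
        rw [guessProb_comp_perm, Equiv.swap_apply_left]

-- Perturbing `κ'` alone leaves the parameters of `κ` exchanged, hence the swapped left-hand side;
-- exchangeability of the prior undoes the swap.
lemma guessProb_comp_swap_le_guessProb_add_swapCost_right [Finite S] [Fintype S']
    (p q : ι → Θ) (i u : ι) :
    guessProb κ κ' g (fun v ↦ p (Equiv.swap i u v)) (fun v ↦ q (Equiv.swap i u v)) i ≤
      guessProb κ κ' g p q u + swapCost (κ' (q u)) (κ' (q i)) := by
  rw [guessProb_comp_perm, Equiv.swap_apply_left]
  refine inv_card_mul_sum_le_add fun _ ↦ prod_right_le_add (fun A ↦ ?_) .of_discrete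
  simpa using pi_le_pi_swap_add (fun v ↦ κ' (q (Equiv.swap i u v))) i u A

end Swap

variable [Fintype S] [MeasurableSingletonClass S] [Fintype S'] [MeasurableSingletonClass S']
  [IsMarkovKernel κ'] {β : Type*} [MeasurableSpace β] [MeasurableSingletonClass β] {bin : Θ → β}
  (hbin : Measurable bin) {ε : ℝ≥0∞}
  (hclose : (∀ a b, bin a = bin b → swapCost (κ a) (κ b) ≤ ε) ∨
    ∀ a b, bin a = bin b → swapCost (κ' a) (κ' b) ≤ ε)
  {ν : Measure (ι → Θ)} (hν : IsExchangeable ν)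
include hbin hclose hν

lemma lintegral_cellWeight_mul_guessProb_le [Finite β] [DecidableEq β] (i u : ι) :
    ∫⁻ p, cellWeight (fun v ↦ bin (p v)) i u * guessProb κ κ' g p p i ∂ν ≤
      ∫⁻ p, cellWeight (fun v ↦ bin (p v)) i u * (guessProb κ κ' g p p u + ε) ∂ν := by
  have hcell : ∀ (p : ι → Θ) {x y : ℝ≥0∞}, (bin (p u) = bin (p i) → x ≤ y) →
      cellWeight (fun v ↦ bin (p v)) i u * x ≤ cellWeight (fun v ↦ bin (p v)) i u * y :=
    fun p x y hxy ↦ by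
      by_cases h : bin (p u) = bin (p i)
      · exact mul_le_mul_right (hxy h) _
      · simp [cellWeight, h]
  rcases hclose with hclose | hclose
  · exact lintegral_mono fun p ↦ hcell p fun h ↦
      (guessProb_le_guessProb_add_swapCost_left κ κ' g p p i u).trans
        (add_le_add_right (hclose _ _ h.symm) _)
  · rw [← (hν (Equiv.swap i u)).lintegral_comp <|
      (measurable_comp_labels hbin fun c ↦ cellWeight c i u).fun_mul
        (measurable_guessProb κ κ' g i)]
    refine lintegral_mono fun p ↦ ?_
    rw [cellWeight_comp_swap fun v ↦ bin (p v)]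
    exact hcell p fun h ↦
      (guessProb_comp_swap_le_guessProb_add_swapCost_right κ κ' g p p i u).trans
        (add_le_add_right (hclose _ _ h) _)

theorem lintegral_guessProb_le [Nonempty ι] [Fintype β] [IsProbabilityMeasure ν] (i : ι) :
    ∫⁻ p, guessProb κ κ' g p p i ∂ν ≤ Fintype.card β / Fintype.card ι + ε := by
  classical
  have hw : ∀ u, Measurable fun p : ι → Θ ↦ cellWeight (fun v ↦ bin (p v)) i u := fun u ↦
    measurable_comp_labels hbin fun c ↦ cellWeight c i u
  have hG : ∀ u, Measurable fun p ↦ guessProb κ κ' g p p u := measurable_guessProb κ κ' g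
  calc ∫⁻ p, guessProb κ κ' g p p i ∂ν
      = ∑ u, ∫⁻ p, cellWeight (fun v ↦ bin (p v)) i u * guessProb κ κ' g p p i ∂ν := by
        rw [← lintegral_finsetSum _ fun u _ ↦ (hw u).fun_mul (hG i)]
        simp only [← Finset.sum_mul, sum_cellWeight, one_mul]
    _ ≤ ∑ u, ∫⁻ p, cellWeight (fun v ↦ bin (p v)) i u * (guessProb κ κ' g p p u + ε) ∂ν :=
        Finset.sum_le_sum fun u _ ↦
          lintegral_cellWeight_mul_guessProb_le κ κ' g hbin hclose hν i u
    _ = ∫⁻ p, (∑ u, cellWeight (fun v ↦ bin (p v)) i u * guessProb κ κ' g p p u + ε) ∂ν := by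
        rw [← lintegral_finsetSum _ fun u _ ↦ (hw u).fun_mul ((hG u).add_const ε)]
        simp only [mul_add, Finset.sum_add_distrib, ← Finset.sum_mul, sum_cellWeight, one_mul]
    _ ≤ ∫⁻ p, ((cellCard (fun v ↦ bin (p v)) i : ℝ≥0∞)⁻¹ + ε) ∂ν := by
        refine lintegral_mono fun p ↦ add_le_add_left ?_ ε
        calc ∑ u, cellWeight (fun v ↦ bin (p v)) i u * guessProb κ κ' g p p u
            ≤ ∑ u, (cellCard (fun v ↦ bin (p v)) i : ℝ≥0∞)⁻¹ * guessProb κ κ' g p p u := by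
              gcongr
              exact cellWeight_le_inv_cellCard _ _ _
          _ ≤ (cellCard (fun v ↦ bin (p v)) i : ℝ≥0∞)⁻¹ := by
              rw [← Finset.mul_sum]
              exact mul_le_of_le_one_right' (sum_guessProb_le_one κ κ' g p p)
    _ ≤ Fintype.card β / Fintype.card ι + ε := by
        rw [lintegral_add_right _ measurable_const, lintegral_const, measure_univ, mul_one]
        gcongr
        exact lintegral_inv_cellCard_le hν hbin i

end Guessing

section Anonymization

variable {ι Θ S S' Ω : Type*} [Fintype ι] [DecidableEq ι] [MeasurableSpace Θ]
  [MeasurableSpace S] [MeasurableSpace S'] [MeasurableSpace Ω]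

/-- The random traces `X`, `W` and the random permutation `prm` follow the anonymization model
with actual trace kernel `κ`, training trace kernel `κ'` and law `ν` of the user parameters: given
parameters `p`, the traces of user `u` have laws `κ (p u)` and `κ' (p u)`, everything is
independent, and `prm` is uniform and independent of the traces. -/
structure IsAnonymization (κ : Kernel Θ S) (κ' : Kernel Θ S') (ν : Measure (ι → Θ))
    (μ : Measure Ω) (X : Ω → ι → S) (W : Ω → ι → S') (prm : Ω → Equiv.Perm ι) : Prop where
  measurable_actual : Measurable X
  measurable_training : Measurable W
  measurableSet_perm_eq : ∀ σ, MeasurableSet {ω | prm ω = σ}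
  measure_perm_eq_and_mem : ∀ (σ : Equiv.Perm ι) {T : Set ((ι → S) × (ι → S'))},
    MeasurableSet T → μ {ω | prm ω = σ ∧ (X ω, W ω) ∈ T} =
      (Fintype.card (Equiv.Perm ι) : ℝ≥0∞)⁻¹ *
        ∫⁻ p, traceLaw κ κ' p p T ∂ν

namespace IsAnonymization

variable {κ : Kernel Θ S} {κ' : Kernel Θ S'} {ν : Measure (ι → Θ)} {μ : Measure Ω}
  {X : Ω → ι → S} {W : Ω → ι → S'} {prm : Ω → Equiv.Perm ι}
  (h : IsAnonymization κ κ' ν μ X W prm)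
include h

lemma measurable_perm_apply [MeasurableSpace ι] (i : ι) : Measurable fun ω ↦ prm ω i := by
  let _ : MeasurableSpace (Equiv.Perm ι) := ⊤
  have hprm : Measurable prm := measurable_to_countable' h.measurableSet_perm_eq
  exact (measurable_from_top (f := fun σ : Equiv.Perm ι ↦ σ i)).comp hprm

variable [Finite S] [MeasurableSingletonClass S]

lemma measurable_observation :
    Measurable fun ω ↦ (W ω, fun v ↦ X ω ((prm ω).symm v)) := by
  let _ : MeasurableSpace (Equiv.Perm ι) := ⊤
  have hprm : Measurable prm := measurable_to_countable' h.measurableSet_perm_eq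
  have hshuffle : Measurable fun z : (ι → S) × Equiv.Perm ι ↦ fun v ↦ z.1 (z.2.symm v) :=
    .of_discrete
  exact h.measurable_training.prodMk (hshuffle.comp (h.measurable_actual.prodMk hprm))

variable [Finite S'] [MeasurableSingletonClass S'] [IsMarkovKernel κ] [IsMarkovKernel κ']

lemma measure_guess_eq (g : (ι → S') × (ι → S) → ι) (i : ι) :
    μ {ω | g (W ω, fun v ↦ X ω ((prm ω).symm v)) = prm ω i} =
      ∫⁻ p, guessProb κ κ' g p p i ∂ν := by
  have hunion : {ω | g (W ω, fun v ↦ X ω ((prm ω).symm v)) = prm ω i} =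
      ⋃ σ, {ω | prm ω = σ ∧ (X ω, W ω) ∈ guessedUser g σ ⁻¹' {i}} := by
    ext ω
    simp [guessedUser, Equiv.symm_apply_eq]
  have hdisjoint : Pairwise (Function.onFun Disjoint fun σ ↦
      {ω | prm ω = σ ∧ (X ω, W ω) ∈ guessedUser g σ ⁻¹' {i}}) := fun σ τ hne ↦
    Set.disjoint_left.2 fun ω hσ hτ ↦ hne (hσ.1.symm.trans hτ.1)
  have hmeas : ∀ σ, MeasurableSet {ω | prm ω = σ ∧ (X ω, W ω) ∈ guessedUser g σ ⁻¹' {i}} :=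
    fun σ ↦ (h.measurableSet_perm_eq σ).inter <|
      (h.measurable_actual.prodMk h.measurable_training)
        (.of_discrete (s := guessedUser g σ ⁻¹' {i}))
  have hlaw : ∀ σ, Measurable fun p : ι → Θ ↦ traceLaw κ κ' p p (guessedUser g σ ⁻¹' {i}) :=
    fun σ ↦ Measure.measurable_measure.1 (measurable_traceLaw κ κ') _ .of_discrete
  calc μ {ω | g (W ω, fun v ↦ X ω ((prm ω).symm v)) = prm ω i}
      = ∑ σ, μ {ω | prm ω = σ ∧ (X ω, W ω) ∈ guessedUser g σ ⁻¹' {i}} := by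
        rw [hunion, measure_iUnion hdisjoint hmeas, tsum_fintype]
    _ = ∑ σ : Equiv.Perm ι, (Fintype.card (Equiv.Perm ι) : ℝ≥0∞)⁻¹ *
          ∫⁻ p, traceLaw κ κ' p p (guessedUser g σ ⁻¹' {i}) ∂ν :=
        Finset.sum_congr rfl fun σ _ ↦ h.measure_perm_eq_and_mem σ .of_discrete
    _ = ∫⁻ p, guessProb κ κ' g p p i ∂ν := by
        simp only [guessProb]
        rw [lintegral_const_mul _ (Finset.measurable_fun_sum _ fun σ _ ↦ hlaw σ),
          lintegral_finsetSum _ fun σ _ ↦ hlaw σ, Finset.mul_sum]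

end IsAnonymization

theorem IsAnonymization.neg_log_le_shCondEntropy [Fintype S] [MeasurableSingletonClass S]
    [Fintype S'] [MeasurableSingletonClass S'] {β : Type*} [Fintype β] [MeasurableSpace β]
    [MeasurableSingletonClass β] {κ : Kernel Θ S} {κ' : Kernel Θ S'}
    [IsMarkovKernel κ] [IsMarkovKernel κ'] {ν : Measure (ι → Θ)} [IsProbabilityMeasure ν]
    {μ : Measure Ω} [IsProbabilityMeasure μ] {X : Ω → ι → S} {W : Ω → ι → S'}
    {prm : Ω → Equiv.Perm ι} (h : IsAnonymization κ κ' ν μ X W prm) (hν : IsExchangeable ν)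
    {bin : Θ → β} (hbin : Measurable bin) {ε : ℝ} (hε : 0 ≤ ε)
    (hclose : (∀ a b, bin a = bin b → swapCost (κ a) (κ b) ≤ ENNReal.ofReal ε) ∨
      ∀ a b, bin a = bin b → swapCost (κ' a) (κ' b) ≤ ENNReal.ofReal ε) (i : ι) :
    -Real.log (Fintype.card β / Fintype.card ι + ε) ≤
      shCondEntropy μ (fun ω ↦ prm ω i) (fun ω ↦ (W ω, fun v ↦ X ω ((prm ω).symm v))) := by
  let _ : MeasurableSpace ι := ⊤
  have : Nonempty ι := ⟨i⟩
  have : Nonempty β := ν.nonempty_of_neZero.map fun p ↦ bin (p i)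
  have hS₀ : (0 : ℝ) < Fintype.card β / Fintype.card ι + ε := by positivity
  refine _root_.neg_log_le_shCondEntropy (h.measurable_perm_apply i) h.measurable_observation
    hS₀ fun g ↦ ENNReal.toReal_le_of_le_ofReal hS₀.le ?_
  calc μ {ω | g (W ω, fun v ↦ X ω ((prm ω).symm v)) = prm ω i}
      = ∫⁻ p, guessProb κ κ' g p p i ∂ν := h.measure_guess_eq g i
    _ ≤ Fintype.card β / Fintype.card ι + ENNReal.ofReal ε :=
        lintegral_guessProb_le κ κ' g hbin hclose hν i
    _ = ENNReal.ofReal (Fintype.card β / Fintype.card ι + ε) := by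
        rw [ENNReal.ofReal_add (by positivity) hε, ENNReal.ofReal_div_of_pos (by positivity),
          ENNReal.ofReal_natCast, ENNReal.ofReal_natCast]

end Anonymization

section Rates

open Asymptotics

lemma isLittleO_sq_of_le_mul_rpow {a : ℕ → ℝ} (hnonneg : ∀ n, 0 ≤ a n) {c α : ℝ} (hα : 0 < α)
    (ha : ∀ n : ℕ, a n ≤ c * (n : ℝ) ^ (2 - α)) :
    a =o[atTop] fun n ↦ (n : ℝ) ^ 2 := by
  have hbound : a =O[atTop] fun n ↦ (n : ℝ) ^ (2 - α) :=
    .of_bound c <| .of_forall fun n ↦ by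
      rw [Real.norm_of_nonneg (hnonneg n), Real.norm_of_nonneg (by positivity)]
      exact ha n
  have hratio : Tendsto (fun x : ℝ ↦ x ^ (2 - α) / x ^ 2) atTop (nhds 0) := by
    refine (tendsto_rpow_neg_atTop hα).congr' ?_
    filter_upwards [eventually_gt_atTop 0] with x hx
    rw [← Real.rpow_two, ← Real.rpow_sub hx, sub_sub_cancel_left]
  have hrpow : (fun x : ℝ ↦ x ^ (2 - α)) =o[atTop] fun x ↦ x ^ 2 :=
    isLittleO_of_tendsto' (by
      filter_upwards [eventually_gt_atTop 0] with x hx h using absurd h (by positivity)) hratio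
  exact hbound.trans_isLittleO (hrpow.comp_tendsto tendsto_natCast_atTop_atTop)

lemma tendsto_guessBound {M : ℕ → ℝ} (hM : M =o[atTop] fun n ↦ (n : ℝ) ^ 2) {a : ℝ}
    (ha : 0 < a) :
    Tendsto (fun n : ℕ ↦ (2 / (a / n) + 1) / n + 2 * √(2 * M n) * (a / n)) atTop
      (nhds (2 / a)) := by
  have hinv : Tendsto (fun n : ℕ ↦ (n : ℝ)⁻¹) atTop (nhds 0) :=
    tendsto_inv_atTop_zero.comp tendsto_natCast_atTop_atTop
  have hsqrt : Tendsto (fun n ↦ √(2 * (M n / (n : ℝ) ^ 2))) atTop (nhds 0) := by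
    simpa using (hM.tendsto_div_nhds_zero.const_mul 2).sqrt
  have hlim := (hinv.const_add (2 / a)).add (hsqrt.const_mul (2 * a))
  rw [mul_zero, add_zero, add_zero] at hlim
  refine hlim.congr' ?_
  filter_upwards [eventually_gt_atTop 0] with n hn
  rw [← mul_div_assoc, Real.sqrt_div' _ (by positivity), Real.sqrt_sq n.cast_nonneg]
  field_simp

end Rates

section BernoulliTraces

open unitInterval

/-- The law of a trace of `m` independent `Bernoulli p` samples, as a kernel in `p`. -/
noncomputable def bernTrace (m : ℕ) : Kernel I (Fin m → Bool) where
  toFun p := Measure.pi fun _ ↦ bern p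
  measurable' := measurable_measure_pi fun _ ↦ measurable_bern.comp measurable_subtype_coe

instance isMarkovKernel_bernTrace (m : ℕ) : IsMarkovKernel (bernTrace m) :=
  ⟨fun p ↦ inferInstanceAs (IsProbabilityMeasure (Measure.pi fun _ ↦ bern p))⟩

lemma swapCost_bernTrace_le (m : ℕ) (p q : I) :
    swapCost (bernTrace m p) (bernTrace m q) ≤
      ENNReal.ofReal (2 * √(2 * m) * |bernAngle p - bernAngle q|) := by
  rw [mul_assoc, ← Real.sqrt_sq_eq_abs, ← Real.sqrt_mul (by positivity)]
  unfold swapCost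
  gcongr
  exact one_sub_affinity_pi_bern_pow_four_le m p.2 q.2

/-- The index of the interval of width `d` that contains the angle of `p`; all angles are at most
`π / 2 < 2`. -/
noncomputable def angleBin (d : ℝ) (p : I) : Fin (⌊2 / d⌋₊ + 1) :=
  ⟨min ⌊bernAngle p / d⌋₊ ⌊2 / d⌋₊, by omega⟩

lemma measurable_angleBin (d : ℝ) : Measurable (angleBin d) := by
  have hangle : Measurable bernAngle := by unfold bernAngle; fun_prop
  have hfloor : Measurable fun p : I ↦ ⌊bernAngle p / d⌋₊ :=
    Nat.measurable_floor.comp ((hangle.comp measurable_subtype_coe).div_const d)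
  exact (Measurable.of_discrete (f := fun k : ℕ ↦
    (⟨min k ⌊2 / d⌋₊, by omega⟩ : Fin (⌊2 / d⌋₊ + 1)))).comp hfloor

lemma abs_bernAngle_sub_le {d : ℝ} (hd : 0 < d) {p q : I} (h : angleBin d p = angleBin d q) :
    |bernAngle p - bernAngle q| ≤ d := by
  have hmin : ∀ r : I, min ⌊bernAngle r / d⌋₊ ⌊2 / d⌋₊ = ⌊bernAngle r / d⌋₊ := fun r ↦
    min_eq_left <| Nat.floor_mono <| by
      gcongr
      linarith [(bernAngle_mem_Icc (r : ℝ)).2, Real.pi_le_four]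
  have hfloor : ⌊bernAngle p / d⌋₊ = ⌊bernAngle q / d⌋₊ := by
    simpa only [angleBin, Fin.mk.injEq, hmin] using h
  have hnonneg : ∀ r : I, 0 ≤ bernAngle r / d := fun r ↦
    div_nonneg (bernAngle_mem_Icc (r : ℝ)).1 hd.le
  have hdiff : |bernAngle p / d - bernAngle q / d| ≤ 1 :=
    (Int.abs_sub_lt_one_of_floor_eq_floor <| by
      rw [← Int.natCast_floor_eq_floor (hnonneg p), ← Int.natCast_floor_eq_floor (hnonneg q),
        hfloor]).le
  rwa [← sub_div, abs_div, abs_of_pos hd, div_le_one hd] at hdiff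

lemma neg_log_le_shCondEntropy_bernTrace {ι Ω : Type*} [Fintype ι] [DecidableEq ι]
    [MeasurableSpace Ω] {m l : ℕ} {ν : Measure (ι → I)} [IsProbabilityMeasure ν]
    {μ : Measure Ω} [IsProbabilityMeasure μ] {X : Ω → ι → Fin m → Bool}
    {W : Ω → ι → Fin l → Bool} {prm : Ω → Equiv.Perm ι}
    (h : IsAnonymization (bernTrace m) (bernTrace l) ν μ X W prm) (hν : IsExchangeable ν)
    {d : ℝ} (hd : 0 < d) (i : ι) :
    -Real.log ((2 / d + 1) / Fintype.card ι + 2 * √(2 * min (m : ℝ) l) * d) ≤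
      shCondEntropy μ (fun ω ↦ prm ω i) (fun ω ↦ (W ω, fun v ↦ X ω ((prm ω).symm v))) := by
  have : Nonempty ι := ⟨i⟩
  have hclose : ∀ (k : ℕ) (a b : I), angleBin d a = angleBin d b →
      swapCost (bernTrace k a) (bernTrace k b) ≤ ENNReal.ofReal (2 * √(2 * k) * d) :=
    fun k a b hab ↦ (swapCost_bernTrace_le k a b).trans <| ENNReal.ofReal_le_ofReal <| by
      gcongr
      exact abs_bernAngle_sub_le hd hab
  refine le_trans ?_ <| h.neg_log_le_shCondEntropy hν (measurable_angleBin d) (by positivity)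
    (ε := 2 * √(2 * min (m : ℝ) l) * d) ?_ i
  · gcongr
    rw [Fintype.card_fin, Nat.cast_add_one]
    gcongr
    exact Nat.floor_le (by positivity)
  · rcases min_choice (m : ℝ) l with hmin | hmin <;> rw [hmin]
    exacts [.inl (hclose m), .inr (hclose l)]

theorem eventually_forall_le_shCondEntropy_bernTrace {m l : ℕ → ℕ}
    (hml : (fun n ↦ (min (m n) (l n) : ℝ)) =o[atTop] fun n ↦ (n : ℝ) ^ 2)
    {ν : ∀ n, Measure (Fin n → I)} [∀ n, IsProbabilityMeasure (ν n)]
    (hν : ∀ n, IsExchangeable (ν n)) {Ω : ℕ → Type*} [∀ n, MeasurableSpace (Ω n)]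
    {μ : ∀ n, Measure (Ω n)} [∀ n, IsProbabilityMeasure (μ n)]
    {X : ∀ n, Ω n → Fin n → Fin (m n) → Bool} {W : ∀ n, Ω n → Fin n → Fin (l n) → Bool}
    {prm : ∀ n, Ω n → Equiv.Perm (Fin n)}
    (h : ∀ n, IsAnonymization (bernTrace (m n)) (bernTrace (l n)) (ν n) (μ n) (X n) (W n) (prm n))
    (R : ℝ) :
    ∀ᶠ n in atTop, ∀ i, R ≤ shCondEntropy (μ n) (fun ω ↦ prm n ω i)
      (fun ω ↦ (W n ω, fun v ↦ X n ω ((prm n ω).symm v))) := by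
  have hlim := tendsto_guessBound hml (a := 4 * Real.exp R) (by positivity)
  have hlt : 2 / (4 * Real.exp R) < Real.exp (-R) := by
    rw [Real.exp_neg]
    field_simp
    norm_num
  filter_upwards [hlim.eventually_lt_const hlt, eventually_gt_atTop 0] with n hbound hn i
  have : (0 : ℝ) < n := mod_cast hn
  refine le_trans ?_ (neg_log_le_shCondEntropy_bernTrace (h n) (hν n)
    (d := 4 * Real.exp R / n) (by positivity) i)
  rw [Fintype.card_fin, le_neg, Real.log_le_iff_le_exp (by positivity)]
  exact hbound.le

lemma ae_mem_Icc_of_withDensity {f : ℝ → ℝ} (hf0 : ∀ x ∉ Set.Ioo (0 : ℝ) 1, f x = 0) :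
    ∀ᵐ x ∂volume.withDensity fun x ↦ ENNReal.ofReal (f x), x ∈ Set.Icc (0 : ℝ) 1 := by
  have hzero : Set.EqOn (fun x ↦ ENNReal.ofReal (f x)) 0 (Set.Icc (0 : ℝ) 1)ᶜ := fun x hx ↦ by
    simp [hf0 x fun hx' ↦ hx (Set.Ioo_subset_Icc_self hx')]
  rw [ae_iff, ← Set.compl_def, withDensity_apply _ measurableSet_Icc.compl,
    setLIntegral_congr_fun measurableSet_Icc.compl hzero]
  simp

/-- The law on `[0, 1]` of the parameter of a user, for a law `μP` on `ℝ` carried by `[0, 1]`. -/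
noncomputable def unitLaw (μP : Measure ℝ) : Measure I :=
  μP.map (Set.projIcc 0 1 zero_le_one)

instance isProbabilityMeasure_unitLaw (μP : Measure ℝ) [IsProbabilityMeasure μP] :
    IsProbabilityMeasure (unitLaw μP) :=
  Measure.isProbabilityMeasure_map continuous_projIcc.measurable.aemeasurable

lemma twoStateLaw_preimage_snd {n m l : ℕ} {μP : Measure ℝ} [IsProbabilityMeasure μP]
    (hμP : ∀ᵐ x ∂μP, x ∈ Set.Icc (0 : ℝ) 1)
    {T : Set ((Fin n → Fin m → Bool) × (Fin n → Fin l → Bool))} (hT : MeasurableSet T) :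
    twoStateLaw n m l μP (Prod.snd ⁻¹' T) =
      ∫⁻ p, traceLaw (bernTrace m) (bernTrace l) p p T ∂Measure.pi fun _ ↦ unitLaw μP := by
  let proj : ℝ → I := Set.projIcc 0 1 zero_le_one
  have hproj : Measurable proj := continuous_projIcc.measurable
  have hprojPi : Measurable fun (p : Fin n → ℝ) u ↦ proj (p u) := by fun_prop
  let law (p : Fin n → ℝ) :=
    traceLaw (bernTrace m) (bernTrace l) (fun u ↦ proj (p u)) (fun u ↦ proj (p u))
  have hlaw : Measurable law := (measurable_traceLaw _ _).comp hprojPi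
  have hmem : ∀ᵐ p ∂Measure.pi fun _ : Fin n ↦ μP, ∀ u, p u ∈ Set.Icc (0 : ℝ) 1 :=
    ae_all_iff.2 fun u ↦ (Measure.quasiMeasurePreserving_eval (fun _ ↦ μP) u).ae hμP
  have hbind : twoStateLaw n m l μP =
      (Measure.pi fun _ ↦ μP).bind fun p ↦ (Measure.dirac p).prod (law p) := by
    refine Measure.bind_congr_right ?_
    filter_upwards [hmem] with p hp
    have hcoe : ∀ u, (proj (p u) : ℝ) = p u := fun u ↦
      congrArg Subtype.val (Set.projIcc_of_mem zero_le_one (hp u))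
    simp [law, traceLaw, bernTrace, hcoe]
  rw [hbind, Measure.bind_apply (measurable_snd hT)
      (measurable_measure_prod Measure.measurable_dirac hlaw).aemeasurable]
  simp only [← Set.univ_prod, Measure.prod_prod, measure_univ, one_mul]
  have hpi : (Measure.pi fun _ : Fin n ↦ unitLaw μP) =
      (Measure.pi fun _ ↦ μP).map fun p u ↦ proj (p u) :=
    (Measure.pi_map_pi fun _ ↦ hproj.aemeasurable).symm
  rw [hpi, lintegral_map (Measure.measurable_measure.1 (measurable_traceLaw _ _) T hT) hprojPi]

lemma isAnonymization_of_twoStateLaw {Ω : Type*} [MeasurableSpace Ω] {n m l : ℕ}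
    {μP : Measure ℝ} [IsProbabilityMeasure μP] (hμP : ∀ᵐ x ∂μP, x ∈ Set.Icc (0 : ℝ) 1)
    {μ : Measure Ω} {P : Ω → Fin n → ℝ} {X : Ω → Fin n → Fin m → Bool}
    {W : Ω → Fin n → Fin l → Bool} {prm : Ω → Equiv.Perm (Fin n)} (hX : Measurable X)
    (hW : Measurable W) (hprm : ∀ τ, MeasurableSet {ω | prm ω = τ})
    (hjoint : ∀ τ s, MeasurableSet s → μ {ω | prm ω = τ ∧ (P ω, X ω, W ω) ∈ s} =
      (n.factorial : ℝ≥0∞)⁻¹ * twoStateLaw n m l μP s) :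
    IsAnonymization (bernTrace m) (bernTrace l) (Measure.pi fun _ ↦ unitLaw μP) μ X W prm where
  measurable_actual := hX
  measurable_training := hW
  measurableSet_perm_eq := hprm
  measure_perm_eq_and_mem τ T hT := by
    rw [Fintype.card_perm, Fintype.card_fin, ← twoStateLaw_preimage_snd hμP hT]
    exact hjoint τ _ (measurable_snd hT)

theorem two_state_perfect_anonymity_general {μP : Measure ℝ} [IsProbabilityMeasure μP]
    (hμP : ∀ᵐ x ∂μP, x ∈ Set.Icc (0 : ℝ) 1) {m l : ℕ → ℕ}
    (hml : (fun n ↦ (min (m n) (l n) : ℝ)) =o[atTop] fun n ↦ (n : ℝ) ^ 2)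
    {Ω : ℕ → Type*} [∀ n, MeasurableSpace (Ω n)] {μ : ∀ n, Measure (Ω n)}
    [∀ n, IsProbabilityMeasure (μ n)] {P : ∀ n, Ω n → Fin n → ℝ}
    {X : ∀ n, Ω n → Fin n → Fin (m n) → Bool} {W : ∀ n, Ω n → Fin n → Fin (l n) → Bool}
    {prm : ∀ n, Ω n → Equiv.Perm (Fin n)} (hX : ∀ n, Measurable (X n))
    (hW : ∀ n, Measurable (W n)) (hprm : ∀ n τ, MeasurableSet {ω | prm n ω = τ})
    (hjoint : ∀ n τ s, MeasurableSet s →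
      μ n {ω | prm n ω = τ ∧ (P n ω, X n ω, W n ω) ∈ s} =
        (n.factorial : ℝ≥0∞)⁻¹ * twoStateLaw n (m n) (l n) μP s)
    (u : ∀ n, 0 < n → Fin n) :
    Tendsto (fun n ↦ shCondEntropy (μ n)
      (fun ω ↦ if hn : 0 < n then (prm n ω (u n hn) : ℕ) else 0)
      (fun ω ↦ (W n ω, fun v ↦ X n ω ((prm n ω).symm v)))) atTop atTop := by
  have hmodel : ∀ n, IsAnonymization (bernTrace (m n)) (bernTrace (l n))
      (Measure.pi fun _ ↦ unitLaw μP) (μ n) (X n) (W n) (prm n) := fun n ↦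
    isAnonymization_of_twoStateLaw hμP (hX n) (hW n) (hprm n) (hjoint n)
  refine tendsto_atTop.2 fun R ↦ ?_
  filter_upwards [eventually_forall_le_shCondEntropy_bernTrace hml
    (fun _ ↦ isExchangeable_pi (unitLaw μP)) hmodel R, eventually_gt_atTop 0] with n hle hn
  simpa only [dif_pos hn] using
    (hle (u n hn)).trans_eq (shCondEntropy_comp_left (μ n) Fin.val_injective _ _).symm

end BernoulliTraces

/-- **Two-state i.i.d. model, perfect anonymity.**  If at least one of the trace lengths
`m n`, `l n` is at most `c * n ^ (2 - α)` for some `c, α > 0`, then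
`H(Π(1) | W, Y) → ∞` as `n → ∞`, where `Y` is the anonymized version of `X`
(`Y_{Π(u)} = X_u`, i.e. `Y v = X (Π⁻¹ v)`) and `Π` is a uniformly random permutation
independent of the data. -/
theorem two_state_perfect_anonymity
    (f : ℝ → ℝ) (δ₁ δ₂ : ℝ) (hδ₁ : 0 < δ₁)
    (μP : Measure ℝ) [IsProbabilityMeasure μP]
    (hμP : μP = volume.withDensity fun x => ENNReal.ofReal (f x))
    (hf0 : ∀ x ∉ Set.Ioo (0 : ℝ) 1, f x = 0)
    (hf : ∀ x ∈ Set.Ioo (0 : ℝ) 1, δ₁ < f x ∧ f x < δ₂)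
    (m l : ℕ → ℕ) (c α : ℝ) (hc : 0 < c) (hα : 0 < α)
    (hml : (∀ n : ℕ, (m n : ℝ) ≤ c * (n : ℝ) ^ ((2 : ℝ) - α)) ∨
           (∀ n : ℕ, (l n : ℝ) ≤ c * (n : ℝ) ^ ((2 : ℝ) - α)))
    (Ω : ℕ → Type) (mΩ : ∀ n, MeasurableSpace (Ω n))
    (μ : ∀ n, Measure (Ω n)) (hμ : ∀ n, IsProbabilityMeasure (μ n))
    (P : ∀ n, Ω n → Fin n → ℝ)
    (X : ∀ n, Ω n → Fin n → Fin (m n) → Bool)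
    (W : ∀ n, Ω n → Fin n → Fin (l n) → Bool)
    (prm : ∀ n, Ω n → Equiv.Perm (Fin n))
    (hP : ∀ n, Measurable (P n)) (hX : ∀ n, Measurable (X n))
    (hW : ∀ n, Measurable (W n))
    (hprm : ∀ n (σ : Equiv.Perm (Fin n)), MeasurableSet {ω | prm n ω = σ})
    -- `Π` is uniform on the `n!` permutations, independent of `(P, X, W)`, and
    -- `(P, X, W)` has the two-state i.i.d. law described above:
    (hjoint : ∀ n (σ : Equiv.Perm (Fin n))
        (s : Set ((Fin n → ℝ) × (Fin n → Fin (m n) → Bool) × (Fin n → Fin (l n) → Bool))),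
        MeasurableSet s →
        μ n {ω | prm n ω = σ ∧ (P n ω, X n ω, W n ω) ∈ s} =
          ((n.factorial : ℝ≥0∞))⁻¹ * twoStateLaw n (m n) (l n) μP s) :
    Tendsto (fun n =>
        shCondEntropy (μ n)
          (fun ω => if hn : 0 < n then ((prm n ω ⟨0, hn⟩ : Fin n) : ℕ) else 0)
          (fun ω => (W n ω, fun v => X n ω ((prm n ω).symm v))))
      atTop atTop := by
  have hI := hμP ▸ ae_mem_Icc_of_withDensity hf0
  have hrate : (fun n ↦ (min (m n) (l n) : ℝ)) =o[atTop] fun n ↦ (n : ℝ) ^ 2 :=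
    isLittleO_sq_of_le_mul_rpow (fun n ↦ by positivity) hα fun n ↦
      min_le_iff.2 (hml.imp (· n) (· n))
  exact two_state_perfect_anonymity_general hI hrate hX hW hprm hjoint fun _ hn ↦ ⟨0, hn⟩
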